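/- For every n ≥ 1 and every x ∈ H_n(ℍ_ℂ), det(x̂) = (dt_n(x))², where det is the usual determinant of 2n×2n complex matrices. -/

import Mathlib

/-!
The identity `det x̂ = dt_n(x)²` is proved by induction on `n`. The map `x ↦ x̂` is a ring
homomorphism, and a `⋄`-hermitian matrix has scalar diagonal entries, so when `x₁₁ = a ≠ 0` the
upper left `2 × 2` block of `x̂` is `a • 1`. The Schur complement of that block in `x̂` is the hat of
the Schur complement of `x₁₁` in `x`, whence `det x̂ = a² det ŷ` with `y` the matrix in the recursion
for `dt` (`det_hatM_schur`). As `a` is central, `(a dt(y))² = a² dt(y)²`, and the induction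
hypothesis applies to `y`, which is again `⋄`-hermitian (`isHerm_schur`).

The remaining case `x₁₁ = 0` follows by continuity: both sides are continuous along the line
`t ↦ x + (t - x₁₁) E₁₁`, and they agree on the dense set `t ≠ 0`.
-/

noncomputable section

open Matrix

/-- The biquaternions `ℍ_ℂ`: quaternions with complex coefficients. -/
abbrev HC : Type := Quaternion ℂ

/-- The embedding `ℂ ⊆ ℍ_ℂ` as scalar biquaternions. -/
def cq (z : ℂ) : HC := ⟨z, 0, 0, 0⟩

/-- The `ℂ`-linear involution `x ↦ x⋄` (quaternion conjugation). -/
def qdia (x : HC) : HC := ⟨x.re, -x.imI, -x.imJ, -x.imK⟩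

/-- Coefficientwise complex conjugation `x ↦ x̄`. -/
def qbar (x : HC) : HC :=
  ⟨starRingEnd ℂ x.re, starRingEnd ℂ x.imI, starRingEnd ℂ x.imJ, starRingEnd ℂ x.imK⟩

/-- The conjugate-linear involution `x* = (x̄)⋄`. -/
def qstar (x : HC) : HC := qdia (qbar x)

/-- The natural (Euclidean/product) topology on the biquaternions `ℍ_ℂ ≅ ℂ⁴`. -/
instance : TopologicalSpace HC :=
  TopologicalSpace.induced (fun q : HC => (q.re, q.imI, q.imJ, q.imK)) inferInstance

/-- The 2×2 complex matrix `x̂` associated to a biquaternion `x`. -/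
def hat (x : HC) : Matrix (Fin 2) (Fin 2) ℂ :=
  !![x.re + Complex.I * x.imI, x.imJ + Complex.I * x.imK;
     -x.imJ + Complex.I * x.imK, x.re - Complex.I * x.imI]

/-- The `2n × 2n` complex matrix `Â` obtained by replacing every biquaternion entry `a`
of `A` by the 2×2 block `â`. -/
def hatM {n : ℕ} (A : Matrix (Fin n) (Fin n) HC) :
    Matrix (Fin n × Fin 2) (Fin n × Fin 2) ℂ :=
  Matrix.of fun p q => hat (A p.1 q.1) p.2 q.2

/-- `A` is `⋄`-hermitian: `Aᵈ = A`, i.e. `(A j i)⋄ = A i j` for all `i j`.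
`H_n(ℍ_ℂ)` is the collection of all such matrices. -/
def IsHerm {n : ℕ} (A : Matrix (Fin n) (Fin n) HC) : Prop :=
  ∀ i j, qdia (A j i) = A i j

/-- The defining properties of the sequence of determinants `(dt_n)_{n ≥ 1}`:
`D n` plays the role of `dt_{n+1} : H_{n+1}(ℍ_ℂ) → ℍ_ℂ`.
(i) continuity on `H_{n+1}(ℍ_ℂ)`; (ii) `dt₁((x₁₁)) = x₁₁`;
(iii) the inductive formula for `dt_{n+1}` when `x₁₁ ≠ 0`. -/
def IsDtSeq (D : ∀ n : ℕ, Matrix (Fin (n + 1)) (Fin (n + 1)) HC → HC) : Prop :=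
  (∀ n : ℕ, ContinuousOn (D n) {A | IsHerm A}) ∧
  (∀ A : Matrix (Fin 1) (Fin 1) HC, IsHerm A → D 0 A = A 0 0) ∧
  (∀ (n : ℕ) (A : Matrix (Fin (n + 2)) (Fin (n + 2)) HC), IsHerm A → A 0 0 ≠ 0 →
    D (n + 1) A = A 0 0 *
      D n (Matrix.of fun i j : Fin (n + 1) =>
        A i.succ j.succ - Ring.inverse (A 0 0) * A i.succ 0 * A 0 j.succ))

@[simp] lemma qdia_re (x : HC) : (qdia x).re = x.re := rfl
@[simp] lemma qdia_imI (x : HC) : (qdia x).imI = -x.imI := rfl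
@[simp] lemma qdia_imJ (x : HC) : (qdia x).imJ = -x.imJ := rfl
@[simp] lemma qdia_imK (x : HC) : (qdia x).imK = -x.imK := rfl

@[simp] lemma cq_re (z : ℂ) : (cq z).re = z := rfl
@[simp] lemma cq_imI (z : ℂ) : (cq z).imI = 0 := rfl
@[simp] lemma cq_imJ (z : ℂ) : (cq z).imJ = 0 := rfl
@[simp] lemma cq_imK (z : ℂ) : (cq z).imK = 0 := rfl

lemma qdia_sub (x y : HC) : qdia (x - y) = qdia x - qdia y := by
  ext <;> simp <;> ring

lemma qdia_mul (x y : HC) : qdia (x * y) = qdia y * qdia x := by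
  ext <;> simp <;> ring

lemma qdia_cq (z : ℂ) : qdia (cq z) = cq z := by
  ext <;> simp

lemma cq_mul (z w : ℂ) : cq (z * w) = cq z * cq w := by
  ext <;> simp

lemma cq_comm (z : ℂ) (x : HC) : cq z * x = x * cq z := by
  ext <;> simp [mul_comm]

lemma cq_ne_zero {z : ℂ} (hz : z ≠ 0) : cq z ≠ 0 := by
  intro h
  exact hz (congrArg QuaternionAlgebra.re h)

lemma hat_sub (x y : HC) : hat (x - y) = hat x - hat y := by
  ext i j
  fin_cases i <;> fin_cases j <;> simp [hat] <;> ring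

lemma hat_mul (x y : HC) : hat (x * y) = hat x * hat y := by
  ext i j
  fin_cases i <;> fin_cases j <;> simp [hat, Matrix.mul_apply, Fin.sum_univ_two] <;>
    ring_nf <;> simp only [Complex.I_sq] <;> ring

lemma hat_cq (z : ℂ) : hat (cq z) = z • (1 : Matrix (Fin 2) (Fin 2) ℂ) := by
  ext i j
  fin_cases i <;> fin_cases j <;> simp [hat, cq]

lemma inverse_cq {z : ℂ} (hz : z ≠ 0) : Ring.inverse (cq z) = cq z⁻¹ := by
  have h1 : cq z * cq z⁻¹ = 1 := by
    rw [← cq_mul, mul_inv_cancel₀ hz]; rfl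
  have h2 : cq z⁻¹ * cq z = 1 := by
    rw [← cq_mul, inv_mul_cancel₀ hz]; rfl
  exact Ring.inverse_unit (⟨cq z, cq z⁻¹, h1, h2⟩ : HCˣ)

/-- The diagonal entries of a `⋄`-hermitian matrix are scalars. -/
lemma IsHerm.diag {n : ℕ} {A : Matrix (Fin n) (Fin n) HC} (hA : IsHerm A) (i : Fin n) :
    A i i = cq (A i i).re := by
  -- An element fixed by `⋄` has imaginary parts equal to their own negatives.
  have h := hA i i
  have h1 := congrArg QuaternionAlgebra.imI h
  have h2 := congrArg QuaternionAlgebra.imJ h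
  have h3 := congrArg QuaternionAlgebra.imK h
  simp only [qdia, neg_eq_self] at h1 h2 h3
  ext <;> simp [cq, h1, h2, h3]

/-- The Schur complement of the entry `A 0 0` in `A`, as it occurs in the recursion for `dt`. -/
def schur {n : ℕ} (A : Matrix (Fin (n + 2)) (Fin (n + 2)) HC) :
    Matrix (Fin (n + 1)) (Fin (n + 1)) HC :=
  Matrix.of fun i j : Fin (n + 1) =>
    A i.succ j.succ - Ring.inverse (A 0 0) * A i.succ 0 * A 0 j.succ

lemma isHerm_schur {n : ℕ} {A : Matrix (Fin (n + 2)) (Fin (n + 2)) HC} (hA : IsHerm A)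
    {a : ℂ} (ha : a ≠ 0) (h0 : A 0 0 = cq a) : IsHerm (schur A) := by
  intro i j
  simp only [schur, Matrix.of_apply, h0, inverse_cq ha, qdia_sub, qdia_mul, qdia_cq, hA _ _]
  simp only [mul_assoc, cq_comm a⁻¹]

/-- Splitting off the two rows (or columns) of `Â` that come from the index `0`. -/
def splitEquiv (n : ℕ) : Fin (n + 1) × Fin 2 ≃ Fin 2 ⊕ (Fin n × Fin 2) where
  toFun p := Fin.cases (motive := fun _ => Fin 2 ⊕ (Fin n × Fin 2))
    (Sum.inl p.2) (fun i => Sum.inr (i, p.2)) p.1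
  invFun := Sum.elim (fun k => (0, k)) (fun p => (p.1.succ, p.2))
  left_inv := by
    rintro ⟨i, k⟩
    refine Fin.cases ?_ (fun i => ?_) i <;> rfl
  right_inv := by
    rintro (k | ⟨i, k⟩) <;> rfl

lemma det_hatM_schur {n : ℕ} {A : Matrix (Fin (n + 2)) (Fin (n + 2)) HC}
    {a : ℂ} (ha : a ≠ 0) (h0 : A 0 0 = cq a) :
    (hatM A).det = a ^ 2 * (hatM (schur A)).det := by
  rw [← Matrix.det_reindex_self (splitEquiv (n + 1)) (hatM A)]
  set M := Matrix.reindex (splitEquiv (n + 1)) (splitEquiv (n + 1)) (hatM A)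
  have h11 : M.toBlocks₁₁ = a • (1 : Matrix (Fin 2) (Fin 2) ℂ) := by
    rw [← hat_cq, ← h0]; rfl
  have hmul : M.toBlocks₁₁ * (a⁻¹ • (1 : Matrix (Fin 2) (Fin 2) ℂ)) = 1 := by
    rw [h11]; simp [smul_smul, ha]
  let _ : Invertible M.toBlocks₁₁ := invertibleOfRightInverse _ _ hmul
  have hinv : ⅟ M.toBlocks₁₁ = a⁻¹ • (1 : Matrix (Fin 2) (Fin 2) ℂ) :=
    invOf_eq_right_inv hmul
  rw [← Matrix.fromBlocks_toBlocks M, Matrix.det_fromBlocks₁₁, hinv, h11, Matrix.det_smul]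
  have hS : M.toBlocks₂₂ - M.toBlocks₂₁ * (a⁻¹ • (1 : Matrix (Fin 2) (Fin 2) ℂ)) * M.toBlocks₁₂
      = hatM (schur A) := by
    ext ⟨i, k⟩ ⟨j, l⟩
    simp only [hatM, schur, Matrix.of_apply, h0, inverse_cq ha, hat_sub, hat_mul, hat_cq]
    simp only [Matrix.mul_smul, Matrix.smul_mul, Matrix.mul_one, Matrix.one_mul,
      Matrix.sub_apply, Matrix.smul_apply]
    rfl
  rw [hS]
  simp

lemma continuous_HC {X : Type*} [TopologicalSpace X] {f : X → HC} :
    Continuous f ↔ Continuous (fun x => (f x).re) ∧ Continuous (fun x => (f x).imI) ∧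
      Continuous (fun x => (f x).imJ) ∧ Continuous (fun x => (f x).imK) := by
  rw [continuous_induced_rng]
  refine ⟨fun h => ⟨h.fst, h.snd.fst, h.snd.snd.fst, h.snd.snd.snd⟩, fun h => ?_⟩
  exact h.1.prodMk (h.2.1.prodMk (h.2.2.1.prodMk h.2.2.2))

instance : T2Space HC := by
  refine T2Space.of_injective_continuous (f := fun q : HC => (q.re, q.imI, q.imJ, q.imK)) ?_
    continuous_induced_dom
  intro x y h
  simp only [Prod.mk.injEq] at h
  exact QuaternionAlgebra.ext h.1 h.2.1 h.2.2.1 h.2.2.2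

lemma continuous_sq_HC {X : Type*} [TopologicalSpace X] {f : X → HC} (hf : Continuous f) :
    Continuous (fun x => f x ^ 2) := by
  obtain ⟨h1, h2, h3, h4⟩ := continuous_HC.1 hf
  rw [continuous_HC]
  simp only [sq, Quaternion.re_mul, Quaternion.imI_mul, Quaternion.imJ_mul, Quaternion.imK_mul]
  refine ⟨?_, ?_, ?_, ?_⟩ <;> fun_prop

lemma continuous_cq : Continuous cq :=
  continuous_HC.2 ⟨continuous_id, continuous_const, continuous_const, continuous_const⟩

lemma continuous_hat : Continuous hat := by
  obtain ⟨h1, h2, h3, h4⟩ := continuous_HC.1 continuous_id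
  simp only [id] at h1 h2 h3 h4
  refine continuous_matrix fun i j => ?_
  fin_cases i <;> fin_cases j <;> simp [hat] <;> fun_prop

lemma continuous_det_hatM {n : ℕ} :
    Continuous fun A : Matrix (Fin n) (Fin n) HC => (hatM A).det := by
  refine Continuous.matrix_det (continuous_matrix fun p q => ?_)
  exact (continuous_hat.comp (continuous_id.matrix_elem p.1 q.1)).matrix_elem p.2 q.2

/-- The matrix `A` with its upper left entry replaced by the scalar `t`. -/
def setCorner {n : ℕ} (A : Matrix (Fin (n + 2)) (Fin (n + 2)) HC) (t : ℂ) :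
    Matrix (Fin (n + 2)) (Fin (n + 2)) HC :=
  Matrix.of fun i j => if i = 0 ∧ j = 0 then cq t else A i j

lemma isHerm_setCorner {n : ℕ} {A : Matrix (Fin (n + 2)) (Fin (n + 2)) HC} (hA : IsHerm A)
    (t : ℂ) : IsHerm (setCorner A t) := by
  intro i j
  by_cases h : i = 0 ∧ j = 0
  · simp [setCorner, h, qdia_cq]
  · have h' : ¬ (j = 0 ∧ i = 0) := fun h' => h h'.symm
    simp only [setCorner, Matrix.of_apply, h, h', if_false]
    exact hA i j

lemma continuous_setCorner {n : ℕ} (A : Matrix (Fin (n + 2)) (Fin (n + 2)) HC) :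
    Continuous (setCorner A) := by
  refine continuous_matrix fun i j => ?_
  by_cases h : i = 0 ∧ j = 0
  · simpa [setCorner, h] using continuous_cq
  · simpa only [setCorner, Matrix.of_apply, h, if_false] using continuous_const

lemma setCorner_self {n : ℕ} {A : Matrix (Fin (n + 2)) (Fin (n + 2)) HC} (hA : IsHerm A) :
    setCorner A (A 0 0).re = A := by
  ext1 i j
  by_cases h : i = 0 ∧ j = 0
  · obtain ⟨rfl, rfl⟩ := h
    simpa [setCorner] using (hA.diag 0).symm
  · simp only [setCorner, Matrix.of_apply, h, if_false]

/-- For every `n ≥ 1` and every `x ∈ H_n(ℍ_ℂ)`,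
`det(x̂) = (dt_n(x))²` (here `D n = dt_{n+1}`). -/
theorem statement2 (D : ∀ n : ℕ, Matrix (Fin (n + 1)) (Fin (n + 1)) HC → HC)
    (hD : IsDtSeq D) (n : ℕ) (A : Matrix (Fin (n + 1)) (Fin (n + 1)) HC)
    (hA : IsHerm A) :
    cq (Matrix.det (hatM A)) = (D n A) ^ 2 := by
  obtain ⟨hcont, hone, hrec⟩ := hD
  induction n with
  | zero =>
    have hdet : (hatM A).det = (hat (A 0 0)).det := by
      rw [← Matrix.det_reindex_self (Equiv.uniqueProd (Fin 2) (Fin 1)) (hatM A)]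
      rfl
    rw [hone A hA, hdet, hA.diag 0, hat_cq, Matrix.det_smul]
    simp [sq, cq_mul]
  | succ n ih =>
    have key : ∀ B : Matrix (Fin (n + 2)) (Fin (n + 2)) HC, IsHerm B → ∀ a : ℂ, a ≠ 0 →
        B 0 0 = cq a → cq (hatM B).det = D (n + 1) B ^ 2 := by
      intro B hB a ha h0
      have hr : D (n + 1) B = cq a * D n (schur B) := by
        rw [hrec n B hB (h0 ▸ cq_ne_zero ha), h0, schur, h0]
      have hcomm : Commute (cq a) (D n (schur B)) := cq_comm a _
      rw [det_hatM_schur ha h0, hr, hcomm.mul_pow, cq_mul, ih _ (isHerm_schur hB ha h0), sq a,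
        cq_mul, sq (cq a)]
    have hD' : Continuous fun t => D (n + 1) (setCorner A t) :=
      (hcont (n + 1)).comp_continuous (continuous_setCorner A) (isHerm_setCorner hA)
    have hL : Continuous fun t => cq (hatM (setCorner A t)).det :=
      continuous_cq.comp (continuous_det_hatM.comp (continuous_setCorner A))
    have hfun := Continuous.ext_on (dense_compl_singleton (0 : ℂ)) hL (continuous_sq_HC hD')
      fun t ht => key _ (isHerm_setCorner hA t) t ht (by simp [setCorner])
    have hval := congrFun hfun (A 0 0).re
    simpa only [setCorner_self hA] using hval
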